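/- Fix n ≥ 1 and complex numbers z₁,…,zₙ, z′₁,…,z′ₙ, f, g, f′, g′ such that f and g are linearly independent over ℝ. Define L = {(a₁,…,aₙ) ∈ ℤⁿ : there exist b, c ∈ ℤ with Σᵢ aᵢ·zᵢ = b·f + c·g} and L^sing = {(a₁,…,aₙ) ∈ ℤⁿ : there exist b, c ∈ ℤ with Σᵢ aᵢ·zᵢ = b·f + c·g and Σᵢ aᵢ·z′ᵢ = b·f′ + c·g′}. If the ℚ-vector subspaces of ℚⁿ spanned by L^sing and by L have the same dimension (i.e., the lattices L^sing and L have the same rank), then L^sing = L. -/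

import Mathlib

open Complex Finset

/-- If the lattices `L` of integral relations and `L^sing` of singular (tangential) relations
have the same rank (the `ℚ`-spans of their images in `ℚⁿ` have the same dimension), then
`L^sing = L`. -/
theorem singular_relations_eq_of_rank_eq (n : ℕ) (hn : 1 ≤ n)
    (z z' : Fin n → ℂ) (f g f' g' : ℂ)
    (hindep : ∀ s t : ℝ, (s : ℂ) * f + (t : ℂ) * g = 0 → s = 0 ∧ t = 0)
    (L Lsing : Set (Fin n → ℤ))
    (hL : L = {a | ∃ b c : ℤ, ∑ i, (a i : ℂ) * z i = (b : ℂ) * f + (c : ℂ) * g})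
    (hLsing : Lsing = {a | ∃ b c : ℤ,
        ∑ i, (a i : ℂ) * z i = (b : ℂ) * f + (c : ℂ) * g ∧
        ∑ i, (a i : ℂ) * z' i = (b : ℂ) * f' + (c : ℂ) * g'})
    (hrank : Module.rank ℚ
        (Submodule.span ℚ ((fun (a : Fin n → ℤ) (i : Fin n) => (a i : ℚ)) '' Lsing)) =
      Module.rank ℚ
        (Submodule.span ℚ ((fun (a : Fin n → ℤ) (i : Fin n) => (a i : ℚ)) '' L))) :
    Lsing = L := by
  have hsub : Lsing ⊆ L := by
    rw [hL, hLsing]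
    rintro a ⟨b, c, h, _⟩
    exact ⟨b, c, h⟩
  have hspan := Submodule.eq_of_le_of_finrank_eq
    (Submodule.span_mono (R := ℚ)
      (Set.image_mono (f := fun (a : Fin n → ℤ) (i : Fin n) => (a i : ℚ)) hsub))
    (by unfold Module.finrank; rw [hrank])
  have key : ∀ v ∈ Submodule.span ℚ
      ((fun (a : Fin n → ℤ) (i : Fin n) => (a i : ℚ)) '' Lsing),
      ∃ b c : ℚ, ∑ i, (v i : ℂ) * z i = (b : ℂ) * f + (c : ℂ) * g ∧
        ∑ i, (v i : ℂ) * z' i = (b : ℂ) * f' + (c : ℂ) * g' := by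
    intro v hv
    induction hv using Submodule.span_induction with
    | mem x hx =>
      obtain ⟨a, ha, rfl⟩ := hx
      rw [hLsing] at ha
      obtain ⟨b, c, h1, h2⟩ := ha
      exact ⟨b, c, by simpa using h1, by simpa using h2⟩
    | zero => exact ⟨0, 0, by simp, by simp⟩
    | add x y _ _ hx hy =>
      obtain ⟨b, c, h1, h2⟩ := hx
      obtain ⟨b2, c2, h3, h4⟩ := hy
      refine ⟨b + b2, c + c2, ?_, ?_⟩
      · simp only [Pi.add_apply, Rat.cast_add, add_mul, Finset.sum_add_distrib, h1, h3]
        ring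
      · simp only [Pi.add_apply, Rat.cast_add, add_mul, Finset.sum_add_distrib, h2, h4]
        ring
    | smul q x _ hx =>
      obtain ⟨b, c, h1, h2⟩ := hx
      refine ⟨q * b, q * c, ?_, ?_⟩
      · simp only [Pi.smul_apply, smul_eq_mul, Rat.cast_mul, mul_assoc, ← Finset.mul_sum, h1]
        ring
      · simp only [Pi.smul_apply, smul_eq_mul, Rat.cast_mul, mul_assoc, ← Finset.mul_sum, h2]
        ring
  refine Set.Subset.antisymm hsub ?_
  intro a ha
  have hmem : (fun i => (a i : ℚ)) ∈ Submodule.span ℚ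
      ((fun (a : Fin n → ℤ) (i : Fin n) => (a i : ℚ)) '' Lsing) := by
    rw [hspan]
    exact Submodule.subset_span ⟨a, ha, rfl⟩
  obtain ⟨β, γ, h1, h2⟩ := key _ hmem
  simp only [Rat.cast_intCast] at h1 h2
  rw [hL] at ha
  obtain ⟨b, c, h⟩ := ha
  obtain ⟨e1, e2⟩ := hindep ((β : ℝ) - b) ((γ : ℝ) - c) (by
    push_cast
    linear_combination h - h1)
  have e1' : β = b := by exact_mod_cast sub_eq_zero.mp e1
  have e2' : γ = c := by exact_mod_cast sub_eq_zero.mp e2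
  rw [hLsing]
  refine ⟨b, c, h, ?_⟩
  rw [h2, e1', e2']
  simp
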